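/- Let g : ℝ → (0, ∞) be a C² and π-periodic function satisfying 2g'(θ)² + g(θ)² − g(θ)g''(θ) > 0 for all θ. Then the function ‖·‖_g on ℝ², defined by ‖v‖_g = r/g(θ) where v = (r cos θ, r sin θ) with r ≥ 0 (and ‖0‖_g = 0), is a norm on ℝ². -/

import Mathlib

/-- Polar coordinates of a plane vector, with angle within `π` of a prescribed direction `φ`. -/
theorem exists_polar_near (φ : ℝ) (v : ℝ × ℝ) :
    ∃ r θ : ℝ, 0 ≤ r ∧ |θ - φ| ≤ Real.pi ∧ v = (r * Real.cos θ, r * Real.sin θ) := by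
  obtain ⟨x, y⟩ := v
  set z : ℂ := ⟨x * Real.cos φ + y * Real.sin φ, y * Real.cos φ - x * Real.sin φ⟩
  have hre : ‖z‖ * Real.cos z.arg = x * Real.cos φ + y * Real.sin φ :=
    Complex.norm_mul_cos_arg z
  have him : ‖z‖ * Real.sin z.arg = y * Real.cos φ - x * Real.sin φ :=
    Complex.norm_mul_sin_arg z
  have hφ := Real.sin_sq_add_cos_sq φ
  refine ⟨‖z‖, φ + z.arg, norm_nonneg z, ?_, Prod.ext ?_ ?_⟩
  · rw [add_sub_cancel_left]
    exact Complex.abs_arg_le_pi z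
  · simp only [Real.cos_add]
    linear_combination (-x) * hφ - Real.cos φ * hre + Real.sin φ * him
  · simp only [Real.sin_add]
    linear_combination (-y) * hφ - Real.sin φ * hre - Real.cos φ * him

/-- If `h'' + h ≥ 0`, then `h` dominates on `[φ - π, φ + π]` the solution of `u'' + u = 0`
tangent to it at `φ`. -/
theorem tangent_sinusoid_le {h h' h'' : ℝ → ℝ} (hh : ∀ x, HasDerivAt h (h' x) x)
    (hh' : ∀ x, HasDerivAt h' (h'' x) x) (hconv : ∀ x, 0 ≤ h'' x + h x) {φ θ : ℝ}
    (hθ : |θ - φ| ≤ Real.pi) :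
    h φ * Real.cos (θ - φ) + h' φ * Real.sin (θ - φ) ≤ h θ := by
  set F : ℝ → ℝ := fun s => h s * Real.cos (θ - s) + h' s * Real.sin (θ - s) with hF
  have hFd : ∀ s, HasDerivAt F ((h'' s + h s) * Real.sin (θ - s)) s := by
    intro s
    have hs : HasDerivAt (fun s => θ - s) (-1) s := (hasDerivAt_id s).const_sub θ
    refine (((hh s).mul hs.cos).add ((hh' s).mul hs.sin)).congr_deriv ?_
    ring
  have hFc : Continuous F := continuous_iff_continuousAt.2 fun s => (hFd s).continuousAt
  have hFθ : F θ = h θ := by simp [hF]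
  obtain ⟨hl, hu⟩ := abs_le.1 hθ
  change F φ ≤ h θ
  rw [← hFθ]
  rcases le_total φ θ with hle | hle
  · refine monotoneOn_of_deriv_nonneg (convex_Icc φ θ) hFc.continuousOn
      (fun s _ => (hFd s).differentiableAt.differentiableWithinAt) (fun s hs => ?_)
      (Set.left_mem_Icc.2 hle) (Set.right_mem_Icc.2 hle) hle
    rw [interior_Icc] at hs
    rw [(hFd s).deriv]
    exact mul_nonneg (hconv s)
      (Real.sin_nonneg_of_nonneg_of_le_pi (by linarith [hs.2]) (by linarith [hs.1]))
  · refine antitoneOn_of_deriv_nonpos (convex_Icc θ φ) hFc.continuousOn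
      (fun s _ => (hFd s).differentiableAt.differentiableWithinAt) (fun s hs => ?_)
      (Set.left_mem_Icc.2 hle) (Set.right_mem_Icc.2 hle) hle
    rw [interior_Icc] at hs
    rw [(hFd s).deriv]
    exact mul_nonpos_of_nonneg_of_nonpos (hconv s)
      (Real.sin_nonpos_of_nonpos_of_neg_pi_le (by linarith [hs.1]) (by linarith [hs.2]))

/-- The reciprocal `1 / g` of a polar curve of positive curvature dominates its tangent
sinusoids. -/
theorem tangent_sinusoid_le_inv {g : ℝ → ℝ} (hgpos : ∀ θ, 0 < g θ) (hg : ContDiff ℝ 2 g)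
    (hcurv : ∀ θ, 0 < 2 * deriv g θ ^ 2 + g θ ^ 2 - g θ * deriv (deriv g) θ) {φ θ : ℝ}
    (hθ : |θ - φ| ≤ Real.pi) :
    (g φ)⁻¹ * Real.cos (θ - φ) + -deriv g φ / g φ ^ 2 * Real.sin (θ - φ) ≤ (g θ)⁻¹ := by
  have hd : ∀ x, HasDerivAt g (deriv g x) x := fun x =>
    (hg.differentiable (by norm_num) x).hasDerivAt
  have hdd : ∀ x, HasDerivAt (deriv g) (deriv (deriv g) x) x := fun x =>
    (((contDiff_succ_iff_deriv (n := 1)).1 hg).2.2.differentiable (by norm_num) x).hasDerivAt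
  refine tangent_sinusoid_le (h := fun x => (g x)⁻¹) (h' := fun x => -deriv g x / g x ^ 2)
    (h'' := fun x => (2 * deriv g x ^ 2 - g x * deriv (deriv g) x) / g x ^ 3)
    (fun x => (hd x).inv (hgpos x).ne') (fun x => ?_) (fun x => ?_) hθ
  · have hx := (hgpos x).ne'
    refine ((hdd x).neg.div ((hd x).pow 2) (pow_ne_zero 2 hx)).congr_deriv ?_
    simp only [Pi.neg_apply, Pi.pow_apply]
    field_simp
    ring
  · have hx := hgpos x
    have key : (2 * deriv g x ^ 2 - g x * deriv (deriv g) x) / g x ^ 3 + (g x)⁻¹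
        = (2 * deriv g x ^ 2 + g x ^ 2 - g x * deriv (deriv g) x) / g x ^ 3 := by
      field_simp
      ring
    rw [key]
    exact (div_pos (hcurv x) (pow_pos hx 3)).le


/-- Let `g : ℝ → (0,∞)` be `C²`, `π`-periodic, with `2g'² + g² − g·g'' > 0`. Then the
function `N` on `ℝ²` determined in polar coordinates by `N(r cos θ, r sin θ) = r / g θ`
(for `r ≥ 0`) is a norm. -/
theorem stmt18 (g : ℝ → ℝ) (hgpos : ∀ θ, 0 < g θ) (hg : ContDiff ℝ 2 g)
    (hper : ∀ θ, g (θ + Real.pi) = g θ)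
    (hcurv : ∀ θ, 0 < 2 * deriv g θ ^ 2 + g θ ^ 2 - g θ * deriv (deriv g) θ)
    (N : ℝ × ℝ → ℝ)
    (hNpolar : ∀ r θ : ℝ, 0 ≤ r → N (r * Real.cos θ, r * Real.sin θ) = r / g θ) :
    (∀ v : ℝ × ℝ, N v = 0 ↔ v = 0) ∧
    (∀ (c : ℝ) (v : ℝ × ℝ), N (c • v) = |c| * N v) ∧
    (∀ v w : ℝ × ℝ, N (v + w) ≤ N v + N w) := by
  have hpolar := exists_polar_near 0
  refine ⟨fun v => ?_, fun c v => ?_, fun v w => ?_⟩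
  · obtain ⟨r, θ, hr, -, rfl⟩ := hpolar v
    rw [hNpolar r θ hr, div_eq_zero_iff, or_iff_left (hgpos θ).ne']
    refine ⟨fun h => by simp [h], fun h => ?_⟩
    obtain ⟨h1, h2⟩ := Prod.ext_iff.1 h
    simp only [Prod.fst_zero, Prod.snd_zero] at h1 h2
    linear_combination Real.cos θ * h1 + Real.sin θ * h2 - r * Real.sin_sq_add_cos_sq θ
  · obtain ⟨r, θ, hr, -, rfl⟩ := hpolar v
    rw [hNpolar r θ hr]
    rcases le_total 0 c with hc | hc
    · rw [Prod.smul_mk, smul_eq_mul, smul_eq_mul, ← mul_assoc, ← mul_assoc,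
        hNpolar _ θ (mul_nonneg hc hr), abs_of_nonneg hc, mul_div_assoc]
    · have hneg : c • (r * Real.cos θ, r * Real.sin θ)
          = (-c * r * Real.cos (θ + Real.pi), -c * r * Real.sin (θ + Real.pi)) := by
        simp [mul_assoc]
      rw [hneg, hNpolar _ _ (mul_nonneg (neg_nonneg.2 hc) hr), hper, abs_of_nonpos hc,
        mul_div_assoc]
  · obtain ⟨ρ, φ, hρ, -, hvw⟩ := hpolar (v + w)
    obtain ⟨r, α, hr, hα, rfl⟩ := exists_polar_near φ v
    obtain ⟨s, β, hs, hβ, rfl⟩ := exists_polar_near φ w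
    rw [hvw, hNpolar ρ φ hρ, hNpolar r α hr, hNpolar s β hs]
    obtain ⟨h1, h2⟩ := Prod.ext_iff.1 hvw
    simp only [Prod.mk_add_mk] at h1 h2
    have hv := mul_le_mul_of_nonneg_left (tangent_sinusoid_le_inv hgpos hg hcurv hα) hr
    have hw := mul_le_mul_of_nonneg_left (tangent_sinusoid_le_inv hgpos hg hcurv hβ) hs
    have hcos : r * Real.cos (α - φ) + s * Real.cos (β - φ) = ρ := by
      rw [Real.cos_sub, Real.cos_sub]
      linear_combination Real.cos φ * h1 + Real.sin φ * h2 + ρ * Real.sin_sq_add_cos_sq φ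
    have hsin : r * Real.sin (α - φ) + s * Real.sin (β - φ) = 0 := by
      rw [Real.sin_sub, Real.sin_sub]
      linear_combination Real.cos φ * h2 - Real.sin φ * h1
    linear_combination hv + hw - (g φ)⁻¹ * hcos + deriv g φ * (g φ ^ 2)⁻¹ * hsin
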